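/- arXiv:2405.11005 — 3 statements merged into one kernel-verified Lean document; each statement's English description precedes it below -/
import Mathlib

section
/- Let f : ℝⁿ × ℝᵐ → ℝⁿ be a map whose increment g(x,u) := f(x,u) − x is L-Lipschitz in its first argument with constant L > 0, i.e. ‖g(x₁,u) − g(x₂,u)‖ ≤ L‖x₁ − x₂‖ for all x₁, x₂ ∈ ℝⁿ and u ∈ ℝᵐ (Euclidean norms). Let η ≥ 0, let u : ℕ → ℝᵐ be a control sequence, let ω : ℕ → ℝⁿ satisfy ‖ω(k)‖ ≤ η for all k, and let x, x̂ : ℕ → ℝⁿ satisfy x(k+1) = f(x(k), u(k)) + ω(k), x̂(k+1) = f(x̂(k), u(k)), and x(0) = x̂(0). Then for every l ∈ ℕ, ‖x(l) − x̂(l)‖ ≤ (η/L)·((1 + L)^l − 1). -/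
open Finset

lemma le_mul_pow_add_mul_geom_sum {R : Type*} [CommSemiring R] [PartialOrder R] [IsOrderedRing R]
    {a b : R} {v : ℕ → R} (ha : 0 ≤ a) (hv : ∀ n, v (n + 1) ≤ a * v n + b) (n : ℕ) :
    v n ≤ v 0 * a ^ n + b * ∑ i ∈ range n, a ^ i := by
  have hgronwall := discrete_gronwall_prod_general (n₀ := 0) (c := fun _ ↦ a) (b := fun _ ↦ b)
    (fun k _ ↦ hv k) (fun _ _ ↦ ha) n.zero_le
  have hreflect : ∑ k ∈ range n, a ^ (n - (k + 1)) = ∑ i ∈ range n, a ^ i := by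
    simpa only [Nat.sub_sub, Nat.add_comm 1] using sum_range_reflect (a ^ ·) n
  simpa only [prod_const, Nat.card_Ico, Nat.Ico_zero_eq_range, card_range, ← mul_sum, hreflect]
    using hgronwall

section SeminormedAddCommGroup

variable {E : Type*} [SeminormedAddCommGroup E]

lemma norm_map_sub_map_le_of_norm_increment_sub_le {g : E → E} {L : ℝ} {y z : E}
    (hg : ‖(g y - y) - (g z - z)‖ ≤ L * ‖y - z‖) : ‖g y - g z‖ ≤ (1 + L) * ‖y - z‖ :=
  calc ‖g y - g z‖ = ‖(y - z) + ((g y - y) - (g z - z))‖ := by congr 1; abel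
    _ ≤ ‖y - z‖ + L * ‖y - z‖ := norm_add_le_of_le le_rfl hg
    _ = (1 + L) * ‖y - z‖ := by ring

lemma norm_sub_le_of_perturbed_recurrence {F : ℕ → E → E} {K η : ℝ} (hK : 0 ≤ K)
    (hF : ∀ k y z, ‖F k y - F k z‖ ≤ K * ‖y - z‖) {ω x y : ℕ → E} (hω : ∀ k, ‖ω k‖ ≤ η)
    (hx : ∀ k, x (k + 1) = F k (x k) + ω k) (hy : ∀ k, y (k + 1) = F k (y k)) (l : ℕ) :
    ‖x l - y l‖ ≤ ‖x 0 - y 0‖ * K ^ l + η * ∑ i ∈ range l, K ^ i := by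
  refine le_mul_pow_add_mul_geom_sum (v := fun k ↦ ‖x k - y k‖) hK (fun k ↦ ?_) l
  calc ‖x (k + 1) - y (k + 1)‖ = ‖(F k (x k) - F k (y k)) + ω k‖ := by
        rw [hx, hy, add_sub_right_comm]
    _ ≤ K * ‖x k - y k‖ + η := norm_add_le_of_le (hF k _ _) (hω k)

theorem disturbed_nominal_error_bound_general {U : Type*} {f : E → U → E} {L η : ℝ} (hL : 0 < L)
    (hLip : ∀ y z u, ‖(f y u - y) - (f z u - z)‖ ≤ L * ‖y - z‖)
    {u : ℕ → U} {ω x xhat : ℕ → E} (hω : ∀ k, ‖ω k‖ ≤ η)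
    (hx : ∀ k, x (k + 1) = f (x k) (u k) + ω k)
    (hxhat : ∀ k, xhat (k + 1) = f (xhat k) (u k)) (l : ℕ) :
    ‖x l - xhat l‖ ≤ ‖x 0 - xhat 0‖ * (1 + L) ^ l + (η / L) * ((1 + L) ^ l - 1) := by
  have hf (k : ℕ) (y z : E) : ‖f y (u k) - f z (u k)‖ ≤ (1 + L) * ‖y - z‖ :=
    norm_map_sub_map_le_of_norm_increment_sub_le (g := (f · (u k))) (hLip y z (u k))
  have hgeom : ∑ i ∈ range l, (1 + L) ^ i = ((1 + L) ^ l - 1) / L := by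
    rw [geom_sum_eq (by simpa using hL.ne'), add_sub_cancel_left]
  calc ‖x l - xhat l‖
      ≤ ‖x 0 - xhat 0‖ * (1 + L) ^ l + η * ∑ i ∈ range l, (1 + L) ^ i :=
        norm_sub_le_of_perturbed_recurrence (F := fun k y ↦ f y (u k)) (by positivity)
          hf hω hx hxhat l
    _ = ‖x 0 - xhat 0‖ * (1 + L) ^ l + (η / L) * ((1 + L) ^ l - 1) := by
        rw [hgeom]; ring

end SeminormedAddCommGroup

/-- Lemma 1 in Euclidean norm: deviation between the disturbed and nominal trajectories
under identical open-loop controls. -/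
theorem disturbed_nominal_error_bound (n m : ℕ)
    (f : EuclideanSpace ℝ (Fin n) → EuclideanSpace ℝ (Fin m) → EuclideanSpace ℝ (Fin n))
    (L : ℝ) (hL : 0 < L)
    (hLip : ∀ (x₁ x₂ : EuclideanSpace ℝ (Fin n)) (u : EuclideanSpace ℝ (Fin m)),
      ‖(f x₁ u - x₁) - (f x₂ u - x₂)‖ ≤ L * ‖x₁ - x₂‖)
    (η : ℝ) (hη : 0 ≤ η)
    (u : ℕ → EuclideanSpace ℝ (Fin m))
    (ω : ℕ → EuclideanSpace ℝ (Fin n)) (hω : ∀ k, ‖ω k‖ ≤ η)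
    (x xhat : ℕ → EuclideanSpace ℝ (Fin n))
    (hx : ∀ k, x (k + 1) = f (x k) (u k) + ω k)
    (hxhat : ∀ k, xhat (k + 1) = f (xhat k) (u k))
    (h0 : x 0 = xhat 0) :
    ∀ l : ℕ, ‖x l - xhat l‖ ≤ (η / L) * ((1 + L) ^ l - 1) := by
  intro l
  simpa [h0] using disturbed_nominal_error_bound_general hL hLip hω hx hxhat l
end

section
/- Let f : ℝⁿ × ℝᵐ → ℝⁿ be a map whose increment g(x,u) := f(x,u) − x is L-Lipschitz in its first argument with constant L > 0, and let h : ℝⁿ → ℝⁿ be a map such that x ↦ h(x) − x is L_r-Lipschitz with constant L_r ≥ 0 (Euclidean norms). Let η ≥ 0, H ≥ 1 and M ∈ ℕ, let u : ℕ → ℝᵐ, let ω : ℕ → ℝⁿ satisfy ‖ω(k)‖ ≤ η for all k, and let x, x̂ : ℕ → ℝⁿ satisfy x(k+1) = f(x(k), u(k)) + ω(k) and x̂(k+1) = f(x̂(k), u(k)) for all k, with x(0) = x̂(0). Define y, z : ℕ → ℝⁿ by y(0) = x(H−1), z(0) = x̂(H−1); y(j+1) = f(y(j), u(H−1+j)) and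 z(j+1) = f(z(j), u(H−1+j)) for 0 ≤ j < M; and y(j+1) = h(y(j)), z(j+1) = h(z(j)) for j ≥ M. Then for every l ∈ ℕ, ‖y(M+l) − z(M+l)‖ ≤ (η/L)·((1 + L)^{H−1} − 1) · (1 + L)^M · (1 + L_r)^l. -/
/-!
A map whose increment `φ a - a` is `K`-Lipschitz is itself `(1 + K)`-Lipschitz. Hence the distance
between the disturbed and the nominal state satisfies `d (k + 1) ≤ (1 + L) * d k + η` with
`d 0 = 0`, which the discrete Grönwall inequality turns into a geometric sum. From then on both
trajectories follow the same dynamics, so every nominal step multiplies their distance by at most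
`1 + L` and every closed-loop step by at most `1 + Lr`.
-/

open Finset
open scoped NNReal

theorem discrete_gronwall_const {R : Type*} [CommSemiring R] [PartialOrder R] [IsOrderedRing R]
    {d : ℕ → R} {b c : R} (hc : 0 ≤ c) (hd : ∀ k, d (k + 1) ≤ c * d k + b) (n : ℕ) :
    d n ≤ d 0 * c ^ n + b * ∑ i ∈ range n, c ^ i := by
  have hgronwall := discrete_gronwall_prod_general (fun k _ ↦ hd k) (fun _ _ ↦ hc) n.zero_le
  simp only [prod_const, Nat.Ico_zero_eq_range, card_range, Nat.card_Ico, ← mul_sum]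
    at hgronwall
  rw [← sum_range_reflect]
  simpa only [Nat.sub_sub, Nat.add_comm 1] using hgronwall

section Trajectories

variable {α : Type*} [PseudoMetricSpace α] {F : ℕ → α → α} {K : ℝ≥0} {x y : ℕ → α}

theorem dist_le_pow_mul_of_lipschitzWith (hF : ∀ k, LipschitzWith K (F k)) {n : ℕ}
    (hx : ∀ k < n, x (k + 1) = F k (x k)) (hy : ∀ k < n, y (k + 1) = F k (y k)) :
    dist (x n) (y n) ≤ K ^ n * dist (x 0) (y 0) := by
  refine le_geom (u := fun k ↦ dist (x k) (y k)) K.coe_nonneg n fun k hk ↦ ?_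
  rw [hx k hk, hy k hk]
  exact (hF k).dist_le_mul _ _

theorem dist_le_pow_add_geom_sum_of_lipschitzWith {η : ℝ} (hF : ∀ k, LipschitzWith K (F k))
    (hx : ∀ k, dist (x (k + 1)) (F k (x k)) ≤ η) (hy : ∀ k, y (k + 1) = F k (y k)) (n : ℕ) :
    dist (x n) (y n) ≤ dist (x 0) (y 0) * K ^ n + η * ∑ i ∈ range n, (K : ℝ) ^ i := by
  refine discrete_gronwall_const (d := fun k ↦ dist (x k) (y k)) K.coe_nonneg (fun k ↦ ?_) n
  calc dist (x (k + 1)) (y (k + 1))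
      ≤ dist (x (k + 1)) (F k (x k)) + dist (F k (x k)) (F k (y k)) := by
        rw [hy]; exact dist_triangle _ _ _
    _ ≤ η + K * dist (x k) (y k) := add_le_add (hx k) ((hF k).dist_le_mul _ _)
    _ = K * dist (x k) (y k) + η := add_comm _ _

end Trajectories

section Increments

variable {E : Type*} [SeminormedAddCommGroup E] {L : ℝ≥0}

theorem lipschitzWith_one_add_of_sub_self {φ : E → E}
    (hφ : LipschitzWith L fun a ↦ φ a - a) : LipschitzWith (1 + L) φ := by
  simpa using LipschitzWith.id.add hφ

theorem dist_disturbed_nominal_le {F : ℕ → E → E} (hL : 0 < L)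
    (hF : ∀ k, LipschitzWith L fun a ↦ F k a - a) {η : ℝ} {ω x xhat : ℕ → E}
    (hω : ∀ k, ‖ω k‖ ≤ η) (hx : ∀ k, x (k + 1) = F k (x k) + ω k)
    (hxhat : ∀ k, xhat (k + 1) = F k (xhat k)) (h0 : x 0 = xhat 0) (n : ℕ) :
    dist (x n) (xhat n) ≤ η / L * ((1 + L) ^ n - 1) := by
  have hdist (k : ℕ) : dist (x (k + 1)) (F k (x k)) ≤ η := by simpa [hx] using hω k
  have hgeom : ∑ i ∈ range n, (1 + L : ℝ) ^ i = ((1 + L) ^ n - 1) / L := by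
    rw [geom_sum_eq (by simpa using hL.ne'), add_sub_cancel_left]
  calc dist (x n) (xhat n) ≤ η * ∑ i ∈ range n, (1 + L : ℝ) ^ i := by
        simpa [h0] using dist_le_pow_add_geom_sum_of_lipschitzWith
          (fun k ↦ lipschitzWith_one_add_of_sub_self (hF k)) hdist hxhat n
    _ = η / L * ((1 + L) ^ n - 1) := by rw [hgeom]; ring

theorem terminal_candidate_deviation_general {U : Type*} {f : E → U → E} {h : E → E} {Lr : ℝ≥0}
    (hL : 0 < L) (hf : ∀ v, LipschitzWith L fun a ↦ f a v - a)
    (hh : LipschitzWith Lr fun a ↦ h a - a) {η : ℝ} {N M : ℕ} {u : ℕ → U}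
    {ω x xhat y z : ℕ → E} (hω : ∀ k, ‖ω k‖ ≤ η) (hx : ∀ k, x (k + 1) = f (x k) (u k) + ω k)
    (hxhat : ∀ k, xhat (k + 1) = f (xhat k) (u k)) (h0 : x 0 = xhat 0)
    (hy0 : y 0 = x N) (hz0 : z 0 = xhat N)
    (hyf : ∀ j < M, y (j + 1) = f (y j) (u (N + j)))
    (hzf : ∀ j < M, z (j + 1) = f (z j) (u (N + j)))
    (hyh : ∀ j, M ≤ j → y (j + 1) = h (y j)) (hzh : ∀ j, M ≤ j → z (j + 1) = h (z j)) (l : ℕ) :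
    ‖y (M + l) - z (M + l)‖ ≤ η / L * ((1 + L) ^ N - 1) * (1 + L) ^ M * (1 + Lr) ^ l := by
  have hinitial : dist (y 0) (z 0) ≤ η / L * ((1 + L) ^ N - 1) := by
    rw [hy0, hz0]
    exact dist_disturbed_nominal_le hL (fun k ↦ hf (u k)) hω hx hxhat h0 N
  have hnominal : dist (y M) (z M) ≤ (1 + L) ^ M * dist (y 0) (z 0) :=
    dist_le_pow_mul_of_lipschitzWith
      (fun j ↦ lipschitzWith_one_add_of_sub_self (hf (u (N + j)))) hyf hzf
  have hclosed : dist (y (M + l)) (z (M + l)) ≤ (1 + Lr) ^ l * dist (y M) (z M) :=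
    dist_le_pow_mul_of_lipschitzWith (x := fun j ↦ y (M + j)) (y := fun j ↦ z (M + j))
      (fun _ ↦ lipschitzWith_one_add_of_sub_self hh)
      (fun j _ ↦ hyh (M + j) (M.le_add_right j)) (fun j _ ↦ hzh (M + j) (M.le_add_right j))
  calc ‖y (M + l) - z (M + l)‖ = dist (y (M + l)) (z (M + l)) := (dist_eq_norm _ _).symm
    _ ≤ (1 + Lr) ^ l * ((1 + L) ^ M * (η / L * ((1 + L) ^ N - 1))) := by
      grw [hclosed, hnominal, hinitial]
    _ = η / L * ((1 + L) ^ N - 1) * (1 + L) ^ M * (1 + Lr) ^ l := by ring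

end Increments

/-- Lemma 4 (in Euclidean norm): the candidate trajectory initialized at the actual disturbed
state `x (H−1)` and the terminal trajectory initialized at the nominal predicted state
`x̂ (H−1)`, propagated by the nominal dynamics for `M` steps and then by the closed-loop
dynamics, are at distance at most `(η/L)·((1+L)^{H−1} − 1)·(1+L)^M·(1+Lr)^l`. -/
theorem terminal_candidate_deviation (n m : ℕ)
    (f : EuclideanSpace ℝ (Fin n) → EuclideanSpace ℝ (Fin m) → EuclideanSpace ℝ (Fin n))
    (L : ℝ) (hL : 0 < L)
    (hLipf : ∀ (x₁ x₂ : EuclideanSpace ℝ (Fin n)) (u : EuclideanSpace ℝ (Fin m)),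
      ‖(f x₁ u - x₁) - (f x₂ u - x₂)‖ ≤ L * ‖x₁ - x₂‖)
    (h : EuclideanSpace ℝ (Fin n) → EuclideanSpace ℝ (Fin n))
    (Lr : ℝ) (hLr : 0 ≤ Lr)
    (hLiph : ∀ x₁ x₂ : EuclideanSpace ℝ (Fin n),
      ‖(h x₁ - x₁) - (h x₂ - x₂)‖ ≤ Lr * ‖x₁ - x₂‖)
    (η : ℝ) (hη : 0 ≤ η) (H : ℕ) (hH : 1 ≤ H) (M : ℕ)
    (u : ℕ → EuclideanSpace ℝ (Fin m))
    (ω : ℕ → EuclideanSpace ℝ (Fin n)) (hω : ∀ k, ‖ω k‖ ≤ η)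
    (x xhat : ℕ → EuclideanSpace ℝ (Fin n))
    (hx : ∀ k, x (k + 1) = f (x k) (u k) + ω k)
    (hxhat : ∀ k, xhat (k + 1) = f (xhat k) (u k))
    (h0 : x 0 = xhat 0)
    (y z : ℕ → EuclideanSpace ℝ (Fin n))
    (hy0 : y 0 = x (H - 1)) (hz0 : z 0 = xhat (H - 1))
    (hyf : ∀ j, j < M → y (j + 1) = f (y j) (u (H - 1 + j)))
    (hzf : ∀ j, j < M → z (j + 1) = f (z j) (u (H - 1 + j)))
    (hyh : ∀ j, M ≤ j → y (j + 1) = h (y j))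
    (hzh : ∀ j, M ≤ j → z (j + 1) = h (z j)) :
    ∀ l : ℕ, ‖y (M + l) - z (M + l)‖
      ≤ (η / L) * ((1 + L) ^ (H - 1) - 1) * (1 + L) ^ M * (1 + Lr) ^ l :=
  terminal_candidate_deviation_general (L := ⟨L, hL.le⟩) (Lr := ⟨Lr, hLr⟩) hL
    (fun v ↦ lipschitzWith_iff_norm_sub_le.2 (hLipf · · v)) (lipschitzWith_iff_norm_sub_le.2 hLiph)
    hω hx hxhat h0 hy0 hz0 hyf hzf hyh hzh
end

section
/- Let P and Q̄ be real symmetric n×n matrices with P positive definite and Q̄ positive semidefinite, set ρ := λmin(Q̄)/λmax(P), and assume ρ ≤ 1. Let f > 0 and Φ ≥ 0 be real numbers and m ∈ ℕ, and suppose (√(1 − ρ))^m ≤ f/(f + Φ). Let x : ℕ → ℝⁿ be a sequence satisfying x(l+1)ᵀ P x(l+1) − x(l)ᵀ P x(l) ≤ − x(l)ᵀ Q̄ x(l) for every l ∈ ℕ, and suppose √(x(0)ᵀ P x(0)) ≤ f + Φ. Then √(x(m)ᵀ P x(m)) ≤ f. -/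
open Matrix

/-!
With `ρ = λmin(Q) / λmax(P)`, the chain `ρ P ≤ ρ λmax(P) = λmin(Q) ≤ Q` in the Loewner order turns
the decrease `V(x(l+1)) - V(x(l)) ≤ -x(l)ᵀ Q x(l)` of `V(v) = vᵀ P v` into the geometric decay
`V(x(l+1)) ≤ (1 - ρ) V(x(l))`. Taking square roots and iterating contracts the norm `‖x(0)‖_P` by
the factor `(√(1 - ρ)) ^ m`, which the self-triggered condition bounds by `f / (f + Φ)`.
-/

theorem sqrt_le_geom {u : ℕ → ℝ} {c : ℝ} (hc : 0 ≤ c) (m : ℕ)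
    (hu : ∀ l < m, u (l + 1) ≤ c * u l) : √(u m) ≤ √c ^ m * √(u 0) :=
  le_geom (u := fun l => √(u l)) (Real.sqrt_nonneg c) m fun l hl => by
    rw [← Real.sqrt_mul hc]
    exact Real.sqrt_le_sqrt (hu l hl)

section HermitianForm

open scoped ComplexOrder MatrixOrder

variable {𝕜 ι : Type*} [RCLike 𝕜] [Fintype ι]

/-- The Hermitian form `v* A v` of a square matrix, the square of the weighted norm `‖v‖_A` when `A`
is positive semidefinite. It is made real-valued by taking the real part, which loses nothing when
`A` is Hermitian. -/
def hermitianForm (A : Matrix ι ι 𝕜) (v : ι → 𝕜) : ℝ :=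
  RCLike.re (star v ⬝ᵥ A *ᵥ v)

theorem hermitianForm_real (A : Matrix ι ι ℝ) (v : ι → ℝ) : hermitianForm A v = v ⬝ᵥ A *ᵥ v := by
  simp only [hermitianForm, star_trivial, RCLike.re_to_real]

theorem hermitianForm_smul (c : ℝ) (A : Matrix ι ι 𝕜) (v : ι → 𝕜) :
    hermitianForm (c • A) v = c * hermitianForm A v := by
  simp only [hermitianForm, smul_mulVec, dotProduct_smul, RCLike.smul_re]

theorem hermitianForm_mono {A B : Matrix ι ι 𝕜} (hAB : A ≤ B) (v : ι → 𝕜) :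
    hermitianForm A v ≤ hermitianForm B v := by
  have hnonneg := (le_iff.1 hAB).re_dotProduct_nonneg v
  rwa [sub_mulVec, dotProduct_sub, map_sub, sub_nonneg] at hnonneg

theorem sqrt_hermitianForm_le_geom {P Q : Matrix ι ι 𝕜} {ρ : ℝ} (hρPQ : ρ • P ≤ Q) (hρ1 : ρ ≤ 1)
    {x : ℕ → ι → 𝕜} {m : ℕ}
    (hdec : ∀ l < m,
      hermitianForm P (x (l + 1)) - hermitianForm P (x l) ≤ -hermitianForm Q (x l)) :
    √(hermitianForm P (x m)) ≤ √(1 - ρ) ^ m * √(hermitianForm P (x 0)) := by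
  refine sqrt_le_geom (u := fun l => hermitianForm P (x l)) (sub_nonneg.2 hρ1) m fun l hl => ?_
  have hρQ : ρ * hermitianForm P (x l) ≤ hermitianForm Q (x l) :=
    hermitianForm_smul ρ P (x l) ▸ hermitianForm_mono hρPQ (x l)
  linarith [hdec l hl]

variable [DecidableEq ι]

theorem algebraMap_le_of_le_eigenvalues {A : Matrix ι ι 𝕜} (hA : A.IsHermitian) {c : ℝ}
    (hc : ∀ i, c ≤ hA.eigenvalues i) : algebraMap ℝ (Matrix ι ι 𝕜) c ≤ A :=
  algebraMap_le_of_le_spectrum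
    (by rwa [hA.spectrum_real_eq_range_eigenvalues, Set.forall_mem_range]) hA

theorem le_algebraMap_of_eigenvalues_le {A : Matrix ι ι 𝕜} (hA : A.IsHermitian) {c : ℝ}
    (hc : ∀ i, hA.eigenvalues i ≤ c) : A ≤ algebraMap ℝ (Matrix ι ι 𝕜) c :=
  le_algebraMap_of_spectrum_le
    (by rwa [hA.spectrum_real_eq_range_eigenvalues, Set.forall_mem_range]) hA

theorem div_smul_le_of_eigenvalues {P Q : Matrix ι ι 𝕜} (hP : P.IsHermitian) (hQ : Q.IsHermitian)
    {a b : ℝ} (ha : 0 ≤ a) (hb : 0 < b) (hPb : ∀ i, hP.eigenvalues i ≤ b)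
    (hQa : ∀ i, a ≤ hQ.eigenvalues i) : (a / b) • P ≤ Q :=
  calc (a / b) • P ≤ (a / b) • algebraMap ℝ (Matrix ι ι 𝕜) b :=
        smul_le_smul_of_nonneg_left (le_algebraMap_of_eigenvalues_le hP hPb) (by positivity)
    _ = algebraMap ℝ (Matrix ι ι 𝕜) a := by
        rw [← algebraMap.coe_smul, smul_eq_mul, div_mul_cancel₀ a hb.ne']
    _ ≤ Q := algebraMap_le_of_le_eigenvalues hQ hQa

theorem terminal_constraint_feasibility_general {P Q : Matrix ι ι 𝕜}
    (hP : P.PosSemidef) (hQ : Q.PosSemidef) {lminQ lmaxP ρ : ℝ}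
    (hlmin : IsLeast (Set.range hQ.1.eigenvalues) lminQ)
    (hlmax : IsGreatest (Set.range hP.1.eigenvalues) lmaxP) (hlmax_pos : 0 < lmaxP)
    (hρ : ρ = lminQ / lmaxP) (hρ1 : ρ ≤ 1)
    {f Φ : ℝ} (hfΦ : 0 < f + Φ) {m : ℕ} (hm : √(1 - ρ) ^ m ≤ f / (f + Φ))
    {x : ℕ → ι → 𝕜}
    (hdec : ∀ l < m,
      hermitianForm P (x (l + 1)) - hermitianForm P (x l) ≤ -hermitianForm Q (x l))
    (h0 : √(hermitianForm P (x 0)) ≤ f + Φ) :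
    √(hermitianForm P (x m)) ≤ f := by
  have hlmin_nonneg : 0 ≤ lminQ := by
    obtain ⟨i, rfl⟩ := hlmin.1
    exact hQ.eigenvalues_nonneg i
  have hρPQ : ρ • P ≤ Q := hρ ▸ div_smul_le_of_eigenvalues hP.1 hQ.1 hlmin_nonneg hlmax_pos
    (fun i => hlmax.2 ⟨i, rfl⟩) (fun i => hlmin.2 ⟨i, rfl⟩)
  calc √(hermitianForm P (x m)) ≤ √(1 - ρ) ^ m * √(hermitianForm P (x 0)) :=
        sqrt_hermitianForm_le_geom hρPQ hρ1 hdec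
    _ ≤ √(1 - ρ) ^ m * (f + Φ) := by gcongr
    _ ≤ f / (f + Φ) * (f + Φ) := by gcongr
    _ = f := div_mul_cancel₀ f hfΦ.ne'

end HermitianForm

/-- Terminal-constraint feasibility: if `(√(1−ρ))^m ≤ f/(f+Φ)` and `‖x 0‖_P ≤ f + Φ`, then
under the per-step decrease the state after `m` steps satisfies `‖x m‖_P ≤ f`. -/
theorem terminal_constraint_feasibility (n : ℕ) (P Qbar : Matrix (Fin n) (Fin n) ℝ)
    (hP : P.PosDef) (hQ : Qbar.PosSemidef)
    (lminQ lmaxP ρ : ℝ)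
    (hlmin : IsLeast (Set.range hQ.1.eigenvalues) lminQ)
    (hlmax : IsGreatest (Set.range hP.1.eigenvalues) lmaxP)
    (hρ : ρ = lminQ / lmaxP) (hρ1 : ρ ≤ 1)
    (f Φ : ℝ) (hf : 0 < f) (hΦ : 0 ≤ Φ) (m : ℕ)
    (hm : (Real.sqrt (1 - ρ)) ^ m ≤ f / (f + Φ))
    (x : ℕ → Fin n → ℝ)
    (hdec : ∀ l : ℕ,
      x (l + 1) ⬝ᵥ P.mulVec (x (l + 1)) - x l ⬝ᵥ P.mulVec (x l) ≤ -(x l ⬝ᵥ Qbar.mulVec (x l)))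
    (h0 : Real.sqrt (x 0 ⬝ᵥ P.mulVec (x 0)) ≤ f + Φ) :
    Real.sqrt (x m ⬝ᵥ P.mulVec (x m)) ≤ f := by
  obtain ⟨i, hi⟩ := hlmax.1
  simp only [← hermitianForm_real] at hdec h0 ⊢
  exact terminal_constraint_feasibility_general hP.posSemidef hQ hlmin hlmax
    (hi ▸ hP.eigenvalues_pos i) hρ hρ1 (by positivity) hm (fun l _ => hdec l) h0
end
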